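/- For reals b₁, b₂: (i) F_S equals the pure F₄-form F⁴(x,y,z) = (θ₀/2)[x¹(y⁰z¹ + y¹z⁰) + x²(y⁰z² + y²z⁰)] for some real θ₀ if and only if b₁ = b₂ = 0 (i.e. the hyperbolic extension is an F₄-manifold iff the underlying surface is a W₀-manifold, θ′ = 0); (ii) for no reals θ₁, θ₂ does F_S equal the pure F₁-form F¹(x,y,z) = (x¹θ₁ − x²θ₂)(y¹z¹ − y²z²) (the hyperbolic extension can never belong to F₁). -/

import Mathlib

noncomputable section

/-- `V = ℝ³` with standard basis and inner product. -/
abbrev V3 : Type := Fin 3 → ℝ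

/-- The standard basis `e₀, e₁, e₂` of `V3`. -/
def e3 (i : Fin 3) : V3 := Pi.single i 1

/-- The standard inner product `g` on `V3`. -/
def g3 (x y : V3) : ℝ := ∑ i, x i * y i

/-- The paracontact endomorphism `φ`: `φe₀ = 0`, `φe₁ = e₂`, `φe₂ = e₁`. -/
def phi3 (x : V3) : V3 := ![0, x 2, x 1]

/-- A map `F : V×V×V → ℝ` is trilinear. -/
def IsTrilinear (F : V3 → V3 → V3 → ℝ) : Prop :=
  (∀ (c : ℝ) (x x' y z : V3), F (c • x + x') y z = c * F x y z + F x' y z) ∧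
  (∀ (c : ℝ) (x y y' z : V3), F x (c • y + y') z = c * F x y z + F x y' z) ∧
  (∀ (c : ℝ) (x y z z' : V3), F x y (c • z + z') = c * F x y z + F x y z')

/-- The components of the fundamental tensor `F_S` of the hyperbolic extension `S(N)`. -/
def FScomp (b₁ b₂ : ℝ) : Fin 3 → Fin 3 → Fin 3 → ℝ :=
  ![![![0, 0, 0], ![0, 0, 0], ![0, 0, 0]],
    ![![0, -1, 0], ![-1, b₁, 0], ![0, 0, -b₁]],
    ![![0, 0, -1], ![0, -b₂, 0], ![-1, 0, b₂]]]

/-!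
Evaluating on the standard basis shows that `F_S = F¹ + F⁴` with `θ₁ = b₁`, `θ₂ = b₂`, `θ₀ = -2`.
The three parameters of such a sum are recovered from its components `(1,1,1)`, `(2,2,2)` and
`(1,1,0)`, so `F_S` is pure `F⁴` exactly when its `F¹`-part vanishes, and it is never pure `F¹`
because `-2 ≠ 0`.
-/

section LinearExpansion

variable {R M N ι : Type*} [Semiring R]

theorem isLinearMap_of_map_smul_add [AddCommMonoid M] [AddCancelCommMonoid N] [Module R M]
    [Module R N] {f : M → N} (hf : ∀ (c : R) (x y : M), f (c • x + y) = c • f x + f y) :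
    IsLinearMap R f where
  map_add x y := by simpa only [one_smul] using hf 1 x y
  map_smul c x := by
    have map_zero : f 0 = 0 := by simpa using hf 1 0 0
    simpa only [map_zero, add_zero] using hf c x 0

theorem apply_eq_sum_smul_apply_single [Fintype ι] [DecidableEq ι] [AddCommMonoid N]
    [Module R N] {f : (ι → R) → N} (hf : IsLinearMap R f) (x : ι → R) :
    f x = ∑ i, x i • f (Pi.single i 1) :=
  calc
    f x = hf.mk' f (∑ i, x i • Pi.single i 1) := by rw [← pi_eq_sum_univ', hf.mk'_apply]
    _ = ∑ i, x i • f (Pi.single i 1) := by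
      rw [map_sum]
      simp only [hf.mk'_apply, hf.map_smul]

end LinearExpansion

theorem IsTrilinear.apply_eq_sum_e3 {F : V3 → V3 → V3 → ℝ} (hF : IsTrilinear F) (x y z : V3) :
    F x y z = ∑ i, ∑ j, ∑ k, x i * (y j * (z k * F (e3 i) (e3 j) (e3 k))) := by
  obtain ⟨h₁, h₂, h₃⟩ := hF
  have expand {f : V3 → ℝ} (hf : ∀ (c : ℝ) (v w : V3), f (c • v + w) = c * f v + f w) (v : V3) :
      f v = ∑ i, v i * f (e3 i) :=
    apply_eq_sum_smul_apply_single (isLinearMap_of_map_smul_add hf) v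
  have expand₁ : F x y z = ∑ i, x i * F (e3 i) y z :=
    expand (f := (F · y z)) (fun c v w ↦ h₁ c v w y z) x
  have expand₂ (i : Fin 3) : F (e3 i) y z = ∑ j, y j * F (e3 i) (e3 j) z :=
    expand (f := (F (e3 i) · z)) (fun c v w ↦ h₂ c (e3 i) v w z) y
  have expand₃ (i j : Fin 3) : F (e3 i) (e3 j) z = ∑ k, z k * F (e3 i) (e3 j) (e3 k) :=
    expand (h₃ · (e3 i) (e3 j)) z
  simp only [expand₁, expand₂, expand₃, Finset.mul_sum]

/-- The pure `F₁`-form `F¹`: the shape of the fundamental tensor of an `F₁`-manifold with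
parameters `θ₁, θ₂`. It is curried, so that forms are added pointwise as functions. -/
def pureF₁ (θ₁ θ₂ : ℝ) (x y z : V3) : ℝ :=
  (x 1 * θ₁ - x 2 * θ₂) * (y 1 * z 1 - y 2 * z 2)

/-- The pure `F₄`-form `F⁴`: the shape of the fundamental tensor of an `F₄`-manifold with
parameter `θ₀`, which is twice the component `(1,1,0)`. -/
def pureF₄ (θ₀ : ℝ) (x y z : V3) : ℝ :=
  θ₀ / 2 * (x 1 * (y 0 * z 1 + y 1 * z 0) + x 2 * (y 0 * z 2 + y 2 * z 0))

theorem pureF₁_zero_zero : pureF₁ 0 0 = 0 := by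
  ext x y z
  simp [pureF₁]

theorem pureF₄_zero : pureF₄ 0 = 0 := by
  ext x y z
  simp [pureF₄]

theorem pureF₁_add_pureF₄_inj {θ₁ θ₂ θ₀ η₁ η₂ η₀ : ℝ} :
    pureF₁ θ₁ θ₂ + pureF₄ θ₀ = pureF₁ η₁ η₂ + pureF₄ η₀ ↔ θ₁ = η₁ ∧ θ₂ = η₂ ∧ θ₀ = η₀ := by
  refine ⟨fun h ↦ ?_, by rintro ⟨rfl, rfl, rfl⟩; rfl⟩
  have component (i j k : Fin 3) := congr($h (e3 i) (e3 j) (e3 k))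
  have h₁₁₁ : θ₁ = η₁ := by simpa [pureF₁, pureF₄, e3] using component 1 1 1
  have h₂₂₂ : θ₂ = η₂ := by simpa [pureF₁, pureF₄, e3] using component 2 2 2
  have h₁₁₀ : θ₀ = η₀ := by simpa [pureF₁, pureF₄, e3] using component 1 1 0
  exact ⟨h₁₁₁, h₂₂₂, h₁₁₀⟩

theorem pureF₁_add_pureF₄_eq_pureF₄_iff {θ₁ θ₂ θ₀ η₀ : ℝ} :
    pureF₁ θ₁ θ₂ + pureF₄ θ₀ = pureF₄ η₀ ↔ θ₁ = 0 ∧ θ₂ = 0 ∧ θ₀ = η₀ := by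
  rw [← pureF₁_add_pureF₄_inj, pureF₁_zero_zero, zero_add]

theorem pureF₁_add_pureF₄_eq_pureF₁_iff {θ₁ θ₂ θ₀ η₁ η₂ : ℝ} :
    pureF₁ θ₁ θ₂ + pureF₄ θ₀ = pureF₁ η₁ η₂ ↔ θ₁ = η₁ ∧ θ₂ = η₂ ∧ θ₀ = 0 := by
  rw [← pureF₁_add_pureF₄_inj, pureF₄_zero, add_zero]

theorem IsTrilinear.eq_pureF₁_add_pureF₄ {b₁ b₂ : ℝ} {F : V3 → V3 → V3 → ℝ}
    (hF : IsTrilinear F)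
    (hcomp : ∀ i j k, F (e3 i) (e3 j) (e3 k) = FScomp b₁ b₂ i j k) :
    F = pureF₁ b₁ b₂ + pureF₄ (-2) := by
  ext x y z
  simp only [hF.apply_eq_sum_e3 x y z, hcomp, Fin.sum_univ_three, FScomp, Matrix.cons_val,
    Pi.add_apply, pureF₁, pureF₄]
  ring

/-- (i) The hyperbolic extension is an `F₄`-manifold iff the underlying surface is a
`W₀`-manifold (`θ′ = 0`, i.e. `b₁ = b₂ = 0`); (ii) the hyperbolic extension can never
belong to `F₁`. -/
theorem statement9 (b₁ b₂ : ℝ)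
    (F : V3 → V3 → V3 → ℝ) (hlin : IsTrilinear F)
    (hsym : ∀ x y z, F x y z = F x z y)
    (hcomp : ∀ i j k, F (e3 i) (e3 j) (e3 k) = FScomp b₁ b₂ i j k) :
    ((∃ θ₀ : ℝ, ∀ x y z, F x y z =
        θ₀ / 2 * (x 1 * (y 0 * z 1 + y 1 * z 0) + x 2 * (y 0 * z 2 + y 2 * z 0)))
      ↔ (b₁ = 0 ∧ b₂ = 0)) ∧
    ¬ (∃ θ₁ θ₂ : ℝ, ∀ x y z, F x y z =
        (x 1 * θ₁ - x 2 * θ₂) * (y 1 * z 1 - y 2 * z 2)) := by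
  have hF : F = pureF₁ b₁ b₂ + pureF₄ (-2) := hlin.eq_pureF₁_add_pureF₄ hcomp
  have eq_pureF₄_iff (θ₀ : ℝ) : F = pureF₄ θ₀ ↔ b₁ = 0 ∧ b₂ = 0 ∧ -2 = θ₀ := by
    rw [hF, pureF₁_add_pureF₄_eq_pureF₄_iff]
  have ne_pureF₁ (θ₁ θ₂ : ℝ) : F ≠ pureF₁ θ₁ θ₂ := by
    rw [hF, Ne, pureF₁_add_pureF₄_eq_pureF₁_iff]
    norm_num
  refine ⟨⟨?_, ?_⟩, ?_⟩
  · rintro ⟨θ₀, h⟩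
    obtain ⟨hb₁, hb₂, -⟩ := (eq_pureF₄_iff θ₀).mp (funext₃ h)
    exact ⟨hb₁, hb₂⟩
  · rintro ⟨hb₁, hb₂⟩
    exact ⟨-2, congr_fun₃ ((eq_pureF₄_iff (-2)).mpr ⟨hb₁, hb₂, rfl⟩)⟩
  · rintro ⟨θ₁, θ₂, h⟩
    exact ne_pureF₁ θ₁ θ₂ (funext₃ h)
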